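/- Let u be a smooth vector field on ℝⁿ, N a unit vector field, and Q^{ij} = δ^{ij} − N^i N^j the tangential projection. For any integer r ≥ 1 there is a constant C (depending only on n, r) such that pointwise |∇^r u|² ≤ C ( Σ_k Q^{i₁j₁}⋯Q^{i_r j_r} ∂^r_{i₁⋯i_r} u_k ∂^r_{j₁⋯j_r} u_k + |∇^{r−1} div u|² + |∇^{r−1} curl u|² ). -/

import Mathlib

open MeasureTheory

/-- Partial derivative ∂_i. -/
noncomputable def pd (n : ℕ) (i : Fin n) (f : (Fin n → ℝ) → ℝ) (x : Fin n → ℝ) : ℝ :=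
  fderiv ℝ f x (Pi.single i 1)

/-- Iterated partial derivative ∂_{I 0} ⋯ ∂_{I (r-1)}. -/
noncomputable def pdm (n : ℕ) :
    (r : ℕ) → (Fin r → Fin n) → ((Fin n → ℝ) → ℝ) → ((Fin n → ℝ) → ℝ)
  | 0, _, f => f
  | r + 1, I, f => pd n (I 0) (pdm n r (fun j => I j.succ) f)


section aux
open MvPolynomial

/-- normal linear form -/
noncomputable def nuP (n : ℕ) (N : Fin n → ℝ) : MvPolynomial (Fin n) ℝ :=
  ∑ k, C (N k) * X k

/-- tangential linear form -/
noncomputable def tauP (n : ℕ) (N : Fin n → ℝ) (i : Fin n) : MvPolynomial (Fin n) ℝ :=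
  X i - C (N i) * nuP n N

lemma sum_tau_sq (n : ℕ) (N : Fin n → ℝ) (hN : ∑ i, (N i)^2 = 1) :
    nuP n N ^ 2 = ∑ i, X i * X i - ∑ i, tauP n N i * tauP n N i := by
  have h1 : ∀ i, tauP n N i * tauP n N i =
      X i * X i - 2 * nuP n N * (C (N i) * X i) + C ((N i)^2) * nuP n N ^ 2 := by
    intro i
    simp only [tauP, map_pow]
    ring
  simp only [h1, Finset.sum_add_distrib, Finset.sum_sub_distrib, ← Finset.mul_sum, ← Finset.sum_mul,
    ← map_sum, hN]
  change _ = _ - (_ - 2 * nuP n N * nuP n N + _)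
  simp
  ring

lemma split_two (n : ℕ) (N : Fin n → ℝ) (hN : ∑ i, (N i)^2 = 1) (M : Multiset (Fin n)) (a : ℕ) :
    (M.map (tauP n N)).prod * nuP n N ^ (a + 2) =
          ((M.map (tauP n N)).prod * nuP n N ^ a) * ∑ i, X i * X i
          - ∑ i, ((i ::ₘ i ::ₘ M).map (tauP n N)).prod * nuP n N ^ a := by
  have h : ∀ i, ((i ::ₘ i ::ₘ M).map (tauP n N)).prod * nuP n N ^ a =
      ((M.map (tauP n N)).prod * nuP n N ^ a) * (tauP n N i * tauP n N i) := by
    intro i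
    simp only [Multiset.map_cons, Multiset.prod_cons]
    ring
  rw [Finset.sum_congr rfl fun i _ => h i, ← Finset.mul_sum, ← mul_sub, ← sum_tau_sq n N hN]
  ring

lemma kernel_poly (n s : ℕ) (N : Fin n → ℝ) (hN : ∑ i, (N i)^2 = 1)
    (L : MvPolynomial (Fin n) ℝ →ₗ[ℝ] ℝ)
    (hQ : ∀ (M : Multiset (Fin n)) k, M.card = s + 1 → L ((M.map (tauP n N)).prod * X k) = 0)
    (hD : ∀ q : MvPolynomial (Fin n) ℝ, q.IsHomogeneous s → L (q * ∑ i, X i * X i) = 0) :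
    ∀ (M : Multiset (Fin n)), M.card = s + 2 → L ((M.map X).prod) = 0 := by
  have hC : ∀ c p, L (C c * p) = c * L p := by
    intro c p; rw [← smul_eq_C_mul, map_smul, smul_eq_mul]
  have hQn : ∀ (M : Multiset (Fin n)), M.card = s + 1 →
      L ((M.map (tauP n N)).prod * nuP n N) = 0 := by
    intro M hM
    rw [nuP, Finset.mul_sum, map_sum]
    refine Finset.sum_eq_zero fun k _ => ?_
    rw [mul_left_comm, hC, hQ M k hM, mul_zero]
  have hnu : (nuP n N).IsHomogeneous 1 := by
    refine IsHomogeneous.sum _ _ _ fun i _ => ?_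
    simpa using (isHomogeneous_C _ (N i)).mul (isHomogeneous_X ℝ i)
  have htau : ∀ i, (tauP n N i).IsHomogeneous 1 := by
    intro i
    refine (isHomogeneous_X ℝ i).sub ?_
    simpa using (isHomogeneous_C _ (N i)).mul hnu
  have htM : ∀ M : Multiset (Fin n), ((M.map (tauP n N)).prod).IsHomogeneous M.card := by
    intro M
    induction M using Multiset.induction_on with
    | empty => simpa using isHomogeneous_one (Fin n) ℝ
    | cons i M ih =>
      simp only [Multiset.map_cons, Multiset.prod_cons, Multiset.card_cons]
      rw [add_comm]
      exact (htau i).mul ih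
  have hA : ∀ a (M : Multiset (Fin n)), M.card + a = s + 2 →
      L ((M.map (tauP n N)).prod * nuP n N ^ a) = 0 := by
    intro a
    induction a using Nat.strong_induction_on with
    | _ a ih =>
    intro M hM
    match a, ih, hM with
    | 0, ih, hM =>
      obtain ⟨i, M', rfl⟩ : ∃ i M', M = i ::ₘ M' := by
        have : M ≠ 0 := by rintro rfl; simp at hM
        obtain ⟨i, hi⟩ := Multiset.exists_mem_of_ne_zero this
        obtain ⟨M', h⟩ := Multiset.exists_cons_of_mem hi
        exact ⟨i, M', h⟩
      have hc : M'.card = s + 1 := by simp at hM; omega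
      have : ((i ::ₘ M').map (tauP n N)).prod * nuP n N ^ 0 =
          (M'.map (tauP n N)).prod * X i - C (N i) * ((M'.map (tauP n N)).prod * nuP n N) := by
        simp only [Multiset.map_cons, Multiset.prod_cons]
        conv_lhs => rw [tauP]
        ring
      rw [this, map_sub, hC, hQ _ _ hc, hQn _ hc]; simp
    | 1, ih, hM => rw [pow_one]; exact hQn M (by omega)
    | a + 2, ih, hM =>
      have := split_two n N hN M a
      rw [this, map_sub, map_sum, hD, Finset.sum_eq_zero, sub_zero]
      · intro i _
        exact ih a (by omega) _ (by simp; omega)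
      · have := (htM M).mul (hnu.pow a)
        rwa [show M.card + 1 * a = s by omega] at this
  have hB : ∀ (P M : Multiset (Fin n)) a, P.card + M.card + a = s + 2 →
      L ((P.map X).prod * ((M.map (tauP n N)).prod * nuP n N ^ a)) = 0 := by
    intro P
    induction P using Multiset.induction_on with
    | empty => intro M a h; simpa using hA a M (by simpa using h)
    | cons i P ih =>
      intro M a h
      simp only [Multiset.card_cons] at h
      have h1 := ih (i ::ₘ M) a (by simp; omega)
      have h2 := ih M (a+1) (by omega)
      have : ((i ::ₘ P).map X).prod * ((M.map (tauP n N)).prod * nuP n N ^ a) =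
          (P.map X).prod * (((i ::ₘ M).map (tauP n N)).prod * nuP n N ^ a) +
          C (N i) * ((P.map X).prod * ((M.map (tauP n N)).prod * nuP n N ^ (a+1))) := by
        have hx : X i = tauP n N i + C (N i) * nuP n N := by simp [tauP]
        simp only [Multiset.map_cons, Multiset.prod_cons]
        rw [hx]
        ring
      rw [this, map_add, hC, h1, h2]; simp
  intro M hM
  simpa using hB M 0 0 (by simpa using hM)

/-- symmetric tensor -/
def SymT (n r : ℕ) (T : (Fin r → Fin n) → Fin n → ℝ) : Prop :=
  ∀ (I J : Fin r → Fin n) k, Finset.univ.val.map I = Finset.univ.val.map J → T I k = T J k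

lemma SymT.congr {n r : ℕ} {T : (Fin r → Fin n) → Fin n → ℝ} (h : SymT n r T)
    {I J : Fin r → Fin n} (hIJ : Finset.univ.val.map I = Finset.univ.val.map J) (k) :
    T I k = T J k := h I J k hIJ

lemma map_ofFn {n r : ℕ} (I : Fin r → Fin n) :
    Finset.univ.val.map I = (List.ofFn I : Multiset (Fin n)) := by
  rw [List.ofFn_eq_map]; rfl

lemma exists_fun_of_multiset {n s : ℕ} (M : Multiset (Fin n)) (h : M.card = s) :
    ∃ I : Fin s → Fin n, Finset.univ.val.map I = M := by
  obtain ⟨l, rfl⟩ : ∃ l : List (Fin n), (l : Multiset (Fin n)) = M := Quot.exists_rep M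
  obtain rfl : l.length = s := by simpa using h
  exact ⟨l.get, by rw [map_ofFn, List.ofFn_get]⟩

lemma map_snoc {n s : ℕ} (I : Fin s → Fin n) (i : Fin n) :
    Finset.univ.val.map (Fin.snoc I i : Fin (s+1) → Fin n) = i ::ₘ Finset.univ.val.map I := by
  rw [Fin.univ_castSuccEmb]
  simp [Function.comp_def]

lemma exists_L (n s : ℕ) (T : (Fin (s+1) → Fin n) → Fin n → ℝ) (h : SymT n (s+1) T)
    (hcurl : ∀ (I : Fin s → Fin n) i j, T (Fin.snoc I i) j = T (Fin.snoc I j) i) :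
    ∃ L : MvPolynomial (Fin n) ℝ →ₗ[ℝ] ℝ, ∀ I k,
      L (((k ::ₘ Finset.univ.val.map I).map X).prod) = T I k := by
  let e : (Fin (s+1) → Fin n) × Fin n → (Fin n →₀ ℕ) := fun p =>
    Multiset.toFinsupp (p.2 ::ₘ Finset.univ.val.map p.1)
  have hf : Function.FactorsThrough (fun p : (Fin (s+1) → Fin n) × Fin n => T p.1 p.2) e := by
    rintro ⟨I, k⟩ ⟨J, l⟩ hIJ
    have hIJ : k ::ₘ Finset.univ.val.map I = l ::ₘ Finset.univ.val.map J :=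
      Multiset.toFinsupp.injective hIJ
    change T I k = T J l
    rcases Multiset.cons_eq_cons.1 hIJ with ⟨rfl, h2⟩ | ⟨hne, M, h1, h2⟩
    · exact h.congr h2 k
    · have hc : M.card = s := by
        have := congrArg Multiset.card h1
        simp at this; omega
      obtain ⟨R, rfl⟩ := exists_fun_of_multiset M hc
      rw [h.congr (J := Fin.snoc R l) (by rw [h1, map_snoc]) k,
        h.congr (I := J) (J := Fin.snoc R k) (by rw [h2, map_snoc]) l]
      exact hcurl _ _ _
  have hX : ∀ M : Multiset (Fin n), ((M.map X).prod : MvPolynomial (Fin n) ℝ) =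
      monomial (Multiset.toFinsupp M) 1 := by
    intro M
    induction M using Multiset.induction_on with
    | empty => simp
    | cons i M ih =>
      rw [Multiset.map_cons, Multiset.prod_cons, ih, ← Multiset.singleton_add, map_add,
        Multiset.toFinsupp_singleton, X, monomial_mul, one_mul]
  refine ⟨(basisMonomials (Fin n) ℝ).constr ℝ
    (Function.extend e (fun p => T p.1 p.2) 0), fun I k => ?_⟩
  have hb : ∀ d, (monomial d (1:ℝ)) = basisMonomials (Fin n) ℝ d := by simp
  rw [hX, hb, Module.Basis.constr_basis]
  exact hf.extend_apply 0 (I, k)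

lemma kernel_T (n s : ℕ) (T : (Fin (s+1) → Fin n) → Fin n → ℝ) (h : SymT n (s+1) T)
    (N : Fin n → ℝ) (hN : ∑ i, (N i)^2 = 1)
    (hcurl : ∀ (I : Fin s → Fin n) i j, T (Fin.snoc I i) j = T (Fin.snoc I j) i)
    (hdiv : ∀ (I : Fin s → Fin n), ∑ i, T (Fin.snoc I i) i = 0)
    (hQ : ∀ (K : Fin (s+1) → Fin n) k, ∑ I : Fin (s+1) → Fin n,
      (∏ m, ((if K m = I m then (1:ℝ) else 0) - N (K m) * N (I m))) * T I k = 0) :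
    T = 0 := by
  obtain ⟨L, hL⟩ := exists_L n s T h hcurl
  have hC : ∀ c p, L (C c * p) = c * L p := by
    intro c p; rw [← smul_eq_C_mul, map_smul, smul_eq_mul]
  ext I k
  rw [← hL]
  refine kernel_poly n s N hN L ?_ ?_ _ (by simp)
  · intro M k hM
    obtain ⟨K, rfl⟩ := exists_fun_of_multiset M hM
    have htau : ∀ i, tauP n N i = ∑ j, C ((if i = j then (1:ℝ) else 0) - N i * N j) * X j := by
      intro i
      simp [tauP, nuP, sub_mul, Finset.sum_sub_distrib, Finset.mul_sum, mul_assoc]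
    rw [← hQ K k, Multiset.map_map]
    change L ((∏ m, tauP n N (K m)) * X k) = _
    simp only [htau]
    rw [Finset.prod_univ_sum, Finset.sum_mul, map_sum, Fintype.piFinset_univ]
    refine Finset.sum_congr rfl fun I _ => ?_
    rw [Finset.prod_mul_distrib, ← map_prod, mul_assoc, hC, ← hL]
    congr 2
    rw [Multiset.map_cons, Multiset.prod_cons, Multiset.map_map, mul_comm]
    rfl
  · intro q hq
    rw [q.as_sum, Finset.sum_mul, map_sum]
    refine Finset.sum_eq_zero fun d hd => ?_
    have hdeg : (Finsupp.toMultiset d).card = s := by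
      have := hq (mem_support_iff.1 hd)
      rw [Finsupp.card_toMultiset]
      simp [Finsupp.weight_apply] at this
      exact this
    obtain ⟨R, hR⟩ := exists_fun_of_multiset _ hdeg
    have hm : (monomial d (coeff d q)) = C (coeff d q) * ((Finset.univ.val.map R).map X).prod := by
      rw [hR, monomial_eq, Finsupp.toMultiset_map, Finsupp.prod_toMultiset]
      congr 1
      rw [Finsupp.prod_mapDomain_index] <;> simp [pow_add]
    rw [hm, mul_assoc, hC, Finset.mul_sum, map_sum]
    rw [show (0:ℝ) = coeff d q * ∑ i, T (Fin.snoc R i) i by rw [hdiv, mul_zero]]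
    congr 1
    refine Finset.sum_congr rfl fun i _ => ?_
    rw [← hL, map_snoc]
    congr 1
    simp only [Multiset.map_cons, Multiset.prod_cons]
    ring

/-- the right-hand side as a function of the tensor of r-th derivatives -/
noncomputable def rhsT (n s : ℕ) (T : (Fin (s+1) → Fin n) → Fin n → ℝ) (N : Fin n → ℝ) : ℝ :=
  (∑ k, ∑ I : Fin (s+1) → Fin n, ∑ J : Fin (s+1) → Fin n,
      (∏ m, ((if I m = J m then (1:ℝ) else 0) - N (I m) * N (J m))) * T I k * T J k)
    + (∑ I : Fin s → Fin n, (∑ i, T (Fin.snoc I i) i)^2)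
    + (∑ I : Fin s → Fin n, ∑ i, ∑ j, (T (Fin.snoc I i) j - T (Fin.snoc I j) i)^2)

lemma proj_idem (n : ℕ) (N : Fin n → ℝ) (hN : ∑ i, (N i)^2 = 1) (i j : Fin n) :
    (if i = j then (1:ℝ) else 0) - N i * N j =
    ∑ k, ((if k = i then (1:ℝ) else 0) - N k * N i) * ((if k = j then (1:ℝ) else 0) - N k * N j) := by
  have h : ∀ k, ((if k = i then (1:ℝ) else 0) - N k * N i) *
      ((if k = j then (1:ℝ) else 0) - N k * N j) =
      (if k = i then (if k = j then (1:ℝ) else 0) else 0)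
      - (if k = i then N k * N j else 0) - (if k = j then N k * N i else 0)
      + (N k)^2 * (N i * N j) := by
    intro k
    split_ifs <;> ring
  simp only [h, Finset.sum_add_distrib, Finset.sum_sub_distrib, ← Finset.sum_mul, hN]
  simp
  ring

lemma quad_eq (n r : ℕ) (t : (Fin r → Fin n) → ℝ) (N : Fin n → ℝ) (hN : ∑ i, (N i)^2 = 1) :
    ∑ I : Fin r → Fin n, ∑ J : Fin r → Fin n,
      (∏ m, ((if I m = J m then (1:ℝ) else 0) - N (I m) * N (J m))) * t I * t J =
    ∑ K : Fin r → Fin n, (∑ I : Fin r → Fin n,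
      (∏ m, ((if K m = I m then (1:ℝ) else 0) - N (K m) * N (I m))) * t I) ^ 2 := by
  have h : ∀ I J : Fin r → Fin n, ∏ m, ((if I m = J m then (1:ℝ) else 0) - N (I m) * N (J m)) =
      ∑ K : Fin r → Fin n, (∏ m, ((if K m = I m then (1:ℝ) else 0) - N (K m) * N (I m))) *
        (∏ m, ((if K m = J m then (1:ℝ) else 0) - N (K m) * N (J m))) := by
    intro I J
    rw [Finset.prod_congr rfl fun m _ => proj_idem n N hN (I m) (J m), Finset.prod_univ_sum,
      Fintype.piFinset_univ]
    simp only [Finset.prod_mul_distrib]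
  simp only [sq, Finset.sum_mul_sum]
  rw [Finset.sum_comm (s := Finset.univ) (t := Finset.univ) (γ := Fin r → Fin n)]
  conv_rhs => rw [Finset.sum_comm]
  rw [Finset.sum_comm]
  refine Finset.sum_congr rfl fun I _ => ?_
  rw [Finset.sum_comm]
  refine Finset.sum_congr rfl fun J _ => ?_
  rw [h, Finset.sum_mul, Finset.sum_mul]
  refine Finset.sum_congr rfl fun K _ => ?_
  ring

lemma rhsT_pos (n s : ℕ) (T : (Fin (s+1) → Fin n) → Fin n → ℝ) (h : SymT n (s+1) T)
    (N : Fin n → ℝ) (hN : ∑ i, (N i)^2 = 1) (hT : T ≠ 0) : 0 < rhsT n s T N := by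
  by_contra hneg
  apply hT
  have h1 : ∀ k, 0 ≤ ∑ K : Fin (s+1) → Fin n, (∑ I : Fin (s+1) → Fin n,
      (∏ m, ((if K m = I m then (1:ℝ) else 0) - N (K m) * N (I m))) * T I k) ^ 2 :=
    fun k => Finset.sum_nonneg fun K _ => sq_nonneg _
  have h1' := Finset.sum_nonneg fun k (_ : k ∈ Finset.univ) => h1 k
  have h2 : 0 ≤ ∑ I : Fin s → Fin n, (∑ i, T (Fin.snoc I i) i)^2 :=
    Finset.sum_nonneg fun K _ => sq_nonneg _
  have h3 : 0 ≤ ∑ I : Fin s → Fin n, ∑ i, ∑ j, (T (Fin.snoc I i) j - T (Fin.snoc I j) i)^2 :=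
    Finset.sum_nonneg fun K _ => Finset.sum_nonneg fun i _ => Finset.sum_nonneg fun j _ =>
      sq_nonneg _
  rw [rhsT, Finset.sum_congr rfl fun k _ => quad_eq n (s+1) (fun I => T I k) N hN] at hneg
  have e1 := le_antisymm (by linarith) h1'
  have e2 := le_antisymm (by linarith) h2
  have e3 := le_antisymm (by linarith) h3
  refine kernel_T n s T h N hN ?_ ?_ ?_
  · intro I i j
    rw [Finset.sum_eq_zero_iff_of_nonneg (fun K _ => Finset.sum_nonneg fun i _ =>
      Finset.sum_nonneg fun j _ => sq_nonneg _)] at e3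
    have e4 := e3 I (Finset.mem_univ _)
    rw [Finset.sum_eq_zero_iff_of_nonneg (fun i _ =>
      Finset.sum_nonneg fun j _ => sq_nonneg _)] at e4
    have e5 := e4 i (Finset.mem_univ _)
    rw [Finset.sum_eq_zero_iff_of_nonneg (fun i _ => sq_nonneg _)] at e5
    exact sub_eq_zero.1 (pow_eq_zero_iff two_ne_zero |>.1 (e5 j (Finset.mem_univ _)))
  · intro I
    rw [Finset.sum_eq_zero_iff_of_nonneg (fun i _ => sq_nonneg _)] at e2
    exact pow_eq_zero_iff two_ne_zero |>.1 (e2 I (Finset.mem_univ _))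
  · intro K k
    rw [Finset.sum_eq_zero_iff_of_nonneg (fun k _ => h1 k)] at e1
    have e4 := e1 k (Finset.mem_univ _)
    rw [Finset.sum_eq_zero_iff_of_nonneg (fun i _ => sq_nonneg _)] at e4
    exact pow_eq_zero_iff two_ne_zero |>.1 (e4 K (Finset.mem_univ _))

lemma rhsT_smul (n s : ℕ) (T : (Fin (s+1) → Fin n) → Fin n → ℝ) (N : Fin n → ℝ) (c : ℝ) :
    rhsT n s (c • T) N = c^2 * rhsT n s T N := by
  simp only [rhsT, Pi.smul_apply, smul_eq_mul, ← Finset.mul_sum, ← mul_sub, mul_pow, mul_add]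
  congr 2
  simp only [Finset.mul_sum]
  refine Finset.sum_congr rfl fun k _ => Finset.sum_congr rfl fun I _ =>
    Finset.sum_congr rfl fun J _ => ?_
  ring

lemma exists_bound (n s : ℕ) : ∃ C > 0, ∀ (T : (Fin (s+1) → Fin n) → Fin n → ℝ) (N : Fin n → ℝ),
    SymT n (s+1) T → ∑ i, (N i)^2 = 1 → ∑ I, ∑ k, (T I k)^2 ≤ C * rhsT n s T N := by
  let K : Set (((Fin (s+1) → Fin n) → Fin n → ℝ) × (Fin n → ℝ)) :=
    {p | SymT n (s+1) p.1 ∧ ∑ I, ∑ k, (p.1 I k)^2 = 1 ∧ ∑ i, (p.2 i)^2 = 1}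
  have hKc : IsClosed K := by
    refine IsClosed.and ?_ (IsClosed.and ?_ ?_)
    · simp only [SymT]
      simp only [Set.ofPred_forall]
      exact isClosed_iInter fun I => isClosed_iInter fun J => isClosed_iInter fun k =>
        isClosed_iInter fun _ => isClosed_eq (by fun_prop) (by fun_prop)
    · exact isClosed_eq (by fun_prop) continuous_const
    · exact isClosed_eq (by fun_prop) continuous_const
  have hKb : Bornology.IsBounded K := by
    refine (Metric.isBounded_closedBall (x := 0) (r := 1)).subset ?_
    rintro ⟨T, N⟩ ⟨_, h1, h2⟩
    rw [mem_closedBall_zero_iff, Prod.norm_def, max_le_iff]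
    constructor
    · refine (pi_norm_le_iff_of_nonneg zero_le_one).2 fun I =>
        (pi_norm_le_iff_of_nonneg zero_le_one).2 fun k => ?_
      rw [Real.norm_eq_abs, ← sq_le_one_iff_abs_le_one, ← h1]
      exact (Finset.single_le_sum (f := fun k => (T I k)^2) (fun k _ => sq_nonneg _)
        (Finset.mem_univ k)).trans (Finset.single_le_sum (f := fun I => ∑ k, (T I k)^2)
          (fun I _ => Finset.sum_nonneg fun k _ => sq_nonneg _) (Finset.mem_univ I))
    · refine (pi_norm_le_iff_of_nonneg zero_le_one).2 fun i => ?_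
      rw [Real.norm_eq_abs, ← sq_le_one_iff_abs_le_one, ← h2]
      exact Finset.single_le_sum (f := fun k => (N k)^2) (fun k _ => sq_nonneg _)
        (Finset.mem_univ i)
  have hK : IsCompact K := Metric.isCompact_of_isClosed_isBounded hKc hKb
  have hF : Continuous (fun p : ((Fin (s+1) → Fin n) → Fin n → ℝ) × (Fin n → ℝ) =>
      rhsT n s p.1 p.2) := by
    unfold rhsT
    fun_prop
  have hpos : ∀ p ∈ K, 0 < rhsT n s p.1 p.2 := by
    rintro ⟨T, N⟩ ⟨h0, h1, h2⟩
    refine rhsT_pos n s T h0 N h2 ?_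
    rintro rfl
    simp at h1
  obtain ⟨m, hm, hmK⟩ : ∃ m > 0, ∀ p ∈ K, m ≤ rhsT n s p.1 p.2 := by
    rcases K.eq_empty_or_nonempty with he | hne
    · exact ⟨1, one_pos, by simp [he]⟩
    · obtain ⟨p, hp, hmin⟩ := hK.exists_isMinOn hne hF.continuousOn
      exact ⟨_, hpos p hp, fun q hq => hmin hq⟩
  refine ⟨m⁻¹, inv_pos.2 hm, fun T N hT hN => ?_⟩
  rw [← div_eq_inv_mul, le_div_iff₀ hm]
  set S := ∑ I, ∑ k, (T I k)^2 with hS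
  have hS0 : 0 ≤ S := Finset.sum_nonneg fun I _ => Finset.sum_nonneg fun k _ => sq_nonneg _
  rcases hS0.eq_or_lt with h0 | hlt
  · rw [← h0, zero_mul]
    by_cases hz : T = 0
    · subst hz; simp [rhsT]
    · exact (rhsT_pos n s T hT N hN hz).le
  · have hc : ((Real.sqrt S)⁻¹)^2 = S⁻¹ := by rw [inv_pow, Real.sq_sqrt hS0]
    have := hmK ((Real.sqrt S)⁻¹ • T, N) ⟨?_, ?_, hN⟩
    · simp only [rhsT_smul, hc] at this
      rwa [← div_eq_inv_mul, le_div_iff₀ hlt, mul_comm] at this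
    · intro I J k hIJ
      simp [hT I J k hIJ]
    · simp only [Pi.smul_apply, smul_eq_mul, mul_pow, hc, ← Finset.mul_sum]
      exact inv_mul_cancel₀ hlt.ne'

lemma pd_contDiff {n : ℕ} (i : Fin n) {f : (Fin n → ℝ) → ℝ} (hf : ContDiff ℝ (⊤ : ℕ∞) f) :
    ContDiff ℝ (⊤ : ℕ∞) (pd n i f) := by
  unfold pd
  exact (hf.fderiv_right (m := (⊤ : ℕ∞)) (by simp)).clm_apply contDiff_const

lemma pd_comm {n : ℕ} (i j : Fin n) {f : (Fin n → ℝ) → ℝ} (hf : ContDiff ℝ (⊤ : ℕ∞) f) :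
    pd n i (pd n j f) = pd n j (pd n i f) := by
  ext x
  have hd : DifferentiableAt ℝ (fderiv ℝ f) x :=
    (hf.fderiv_right (m := (⊤ : ℕ∞)) (by simp)).differentiable (by simp) x
  have key : ∀ a b, pd n a (pd n b f) x = fderiv ℝ (fderiv ℝ f) x (Pi.single a 1) (Pi.single b 1) := by
    intro a b
    change fderiv ℝ (fun y => fderiv ℝ f y (Pi.single b 1)) x (Pi.single a 1) = _
    rw [fderiv_clm_apply hd (differentiableAt_const _)]
    simp
  rw [key, key]
  have hs : IsSymmSndFDerivAt ℝ f x := hf.contDiffAt.isSymmSndFDerivAt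
    (by simp only [minSmoothness_of_isRCLikeNormedField]; exact WithTop.coe_le_coe.2 le_top)
  exact hs _ _

/-- list version -/
noncomputable def pdl (n : ℕ) (l : List (Fin n)) (f : (Fin n → ℝ) → ℝ) : (Fin n → ℝ) → ℝ :=
  l.foldr (pd n) f

lemma pdm_eq (n r : ℕ) (I : Fin r → Fin n) (f : (Fin n → ℝ) → ℝ) :
    pdm n r I f = pdl n (List.ofFn I) f := by
  induction r with
  | zero => simp [pdm, pdl]
  | succ r ih => rw [pdm, ih, List.ofFn_succ]; rfl

lemma pdl_contDiff {n : ℕ} (l : List (Fin n)) {f : (Fin n → ℝ) → ℝ}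
    (hf : ContDiff ℝ (⊤ : ℕ∞) f) : ContDiff ℝ (⊤ : ℕ∞) (pdl n l f) := by
  induction l with
  | nil => exact hf
  | cons a l ih => exact pd_contDiff a ih

lemma pdl_perm {n : ℕ} {l l' : List (Fin n)} (h : l.Perm l') {f : (Fin n → ℝ) → ℝ}
    (hf : ContDiff ℝ (⊤ : ℕ∞) f) : pdl n l f = pdl n l' f := by
  induction h with
  | nil => rfl
  | cons a _ ih => exact congrArg (pd n a) ih
  | swap a b l => exact pd_comm b a (pdl_contDiff l hf)
  | trans _ _ h1 h2 => exact h1.trans h2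

lemma pdl_sub {n : ℕ} (l : List (Fin n)) {f g : (Fin n → ℝ) → ℝ}
    (hf : ContDiff ℝ (⊤ : ℕ∞) f) (hg : ContDiff ℝ (⊤ : ℕ∞) g) :
    pdl n l (fun y => f y - g y) = fun y => pdl n l f y - pdl n l g y := by
  induction l with
  | nil => rfl
  | cons a l ih =>
    change pd n a (pdl n l _) = _
    rw [ih]
    ext y
    simp only [pd]
    rw [fderiv_fun_sub ((pdl_contDiff l hf).differentiable (by simp) y)
      ((pdl_contDiff l hg).differentiable (by simp) y)]
    rfl

lemma pdl_sum {n : ℕ} (l : List (Fin n)) {f : Fin n → (Fin n → ℝ) → ℝ}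
    (hf : ∀ i, ContDiff ℝ (⊤ : ℕ∞) (f i)) :
    pdl n l (fun y => ∑ i, f i y) = fun y => ∑ i, pdl n l (f i) y := by
  induction l with
  | nil => rfl
  | cons a l ih =>
    change pd n a (pdl n l _) = _
    rw [ih]
    ext y
    simp only [pd]
    rw [fderiv_fun_sum fun i _ => (pdl_contDiff l (hf i)).differentiable (by simp) y]
    simp [pdl, pd]

lemma pdm_snoc (n s : ℕ) (I : Fin s → Fin n) (i : Fin n) (f : (Fin n → ℝ) → ℝ) :
    pdm n (s+1) (Fin.snoc I i) f = pdl n (List.ofFn I) (pd n i f) := by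
  have : List.ofFn (Fin.snoc I i : Fin (s+1) → Fin n) = List.ofFn I ++ [i] := by
    rw [List.ofFn_succ_last]; simp
  rw [pdm_eq, this, pdl, List.foldr_append]; rfl

end aux

/-- Pointwise estimate of the full r-th derivative of a vector field u by the tangentially
projected derivatives (with projection Q^{ij} = δ^{ij} − N^iN^j for a unit vector N) together
with ∇^{r−1}div u and ∇^{r−1}curl u. -/
theorem pointwise_div_curl_estimate (n r : ℕ) (hr : 1 ≤ r) :
    ∃ C > 0, ∀ (u : (Fin n → ℝ) → Fin n → ℝ) (N : Fin n → ℝ),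
      ContDiff ℝ (⊤ : ℕ∞) u → (∑ i, (N i)^2) = 1 →
      ∀ x : Fin n → ℝ,
        (∑ I : Fin r → Fin n, ∑ k, (pdm n r I (fun y => u y k) x)^2)
          ≤ C * ((∑ k, ∑ I : Fin r → Fin n, ∑ J : Fin r → Fin n,
                (∏ m, ((if I m = J m then (1:ℝ) else 0) - N (I m) * N (J m)))
                  * pdm n r I (fun y => u y k) x * pdm n r J (fun y => u y k) x)
              + (∑ I : Fin (r-1) → Fin n,
                  (pdm n (r-1) I (fun y => ∑ i, pd n i (fun z => u z i) y) x)^2)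
              + (∑ I : Fin (r-1) → Fin n, ∑ i, ∑ j,
                  (pdm n (r-1) I
                    (fun y => pd n i (fun z => u z j) y - pd n j (fun z => u z i) y) x)^2)) := by
  obtain ⟨s, rfl⟩ : ∃ s, r = s + 1 := ⟨r - 1, by omega⟩
  obtain ⟨C, hC, h⟩ := exists_bound n s
  refine ⟨C, hC, fun u N hu hN x => ?_⟩
  have huk : ∀ k, ContDiff ℝ (⊤ : ℕ∞) (fun y => u y k) := contDiff_pi.1 hu
  have := h (fun I k => pdm n (s+1) I (fun y => u y k) x) N ?_ hN
  · refine this.trans_eq ?_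
    rw [rhsT]
    simp only [pdm_snoc]
    refine congrArg (fun z => C * z) (congrArg₂ (· + ·) (congrArg₂ (· + ·) rfl ?_) ?_)
    · refine Finset.sum_congr rfl fun I _ => ?_
      rw [pdm_eq, pdl_sum _ fun i => pd_contDiff i (huk i)]
    · refine Finset.sum_congr rfl fun I _ => Finset.sum_congr rfl fun i _ =>
        Finset.sum_congr rfl fun j _ => ?_
      rw [pdm_eq, pdl_sub _ (pd_contDiff i (huk j)) (pd_contDiff j (huk i))]
  · intro I J k hIJ
    rw [map_ofFn, map_ofFn, Multiset.coe_eq_coe] at hIJ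
    change pdm n (s+1) I _ x = pdm n (s+1) J _ x
    rw [pdm_eq, pdm_eq, pdl_perm hIJ (huk k)]
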